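/- arXiv:2106.16165 — 3 statements merged into one kernel-verified Lean document; each statement's English description precedes it below -/
import Mathlib

section
/- Asymptotic Fermat's Last Theorem conditional on the Small Derivatives Conjecture: assume there is a constant 0 < η < 1 such that for all but finitely many triples of coprime positive integers (a,b,c) satisfying a + b = c and not, up to order, of the form (1, N, q) with q prime, there exists ψ ∈ 𝒯(a,b) such that a, b are ψ-independent and ‖ψ‖ < c^η. Then there is a positive integer n₀ such that for all n ≥ n₀ and all coprime positive integers a, b, c, one has aⁿ + bⁿ ≠ cⁿ. -/
open Finset

/-- The arithmetic derivative attached to `ψ`: `d^ψ(n) = Σ_{p ∣ n} (n·v_p(n)/p)·ψ(p)`,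
with `d^ψ(0) = 0` (empty sum). Each term is written as `(n/p)·v_p(n)·ψ(p)`, exact since `p ∣ n`. -/
def dpsi (ψ : ℕ → ℤ) (n : ℤ) : ℤ :=
  ∑ p ∈ n.natAbs.primeFactors, (n / (p : ℤ)) * (n.natAbs.factorization p : ℤ) * ψ p

/-- A derivation: a function on primes (zero off primes) with finite norm. -/
def IsDeriv (ψ : ℕ → ℤ) : Prop :=
  (∀ p : ℕ, ¬ p.Prime → ψ p = 0) ∧ ∃ B : ℤ, ∀ p : ℕ, |ψ p| ≤ B

/-- The norm `‖ψ‖ = sup_p |ψ(p)|`. -/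
noncomputable def dNorm (ψ : ℕ → ℤ) : ℝ := ⨆ p : ℕ, (|ψ p| : ℝ)

/-- Membership in `𝒯(a,b)`: a derivation supported on the primes dividing `ab(a+b)`
satisfying `d^ψ(a+b) = d^ψ(a) + d^ψ(b)`. -/
def MemT (a b : ℕ) (ψ : ℕ → ℤ) : Prop :=
  IsDeriv ψ ∧ (∀ p : ℕ, p.Prime → ¬ p ∣ (a * b * (a + b)) → ψ p = 0) ∧
    dpsi ψ ((a : ℤ) + (b : ℤ)) = dpsi ψ (a : ℤ) + dpsi ψ (b : ℤ)

/-- The `ψ`-Wronskian `W^ψ(a,b) = a·d^ψ(b) − b·d^ψ(a)`. -/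
def Wpsi (ψ : ℕ → ℤ) (a b : ℤ) : ℤ := a * dpsi ψ b - b * dpsi ψ a

/-- Membership in `𝒯°(a,b)`: elements of `𝒯(a,b)` for which `a, b` are `ψ`-dependent. -/
def MemT0 (a b : ℕ) (ψ : ℕ → ℤ) : Prop := MemT a b ψ ∧ Wpsi ψ (a : ℤ) (b : ℤ) = 0

/-- The radical of `n`: product of the distinct primes dividing `n`. -/
def radN (n : ℕ) : ℕ := ∏ p ∈ n.primeFactors, p

/-- The Small Derivatives Conjecture with exponent `η`: for all but finitely many triples of
coprime positive integers `(a,b,c)` with `a+b=c`, not of the form `(1,N,q)` with `q` prime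
up to order, there is `ψ ∈ 𝒯(a,b)` with `a,b` `ψ`-independent and `‖ψ‖ < c^η`. -/
def SDC (η : ℝ) : Prop :=
  {t : ℕ × ℕ × ℕ | 0 < t.1 ∧ 0 < t.2.1 ∧ t.1 + t.2.1 = t.2.2 ∧ Nat.Coprime t.1 t.2.1 ∧
    ¬ (∃ N q : ℕ, q.Prime ∧ ({t.1, t.2.1, t.2.2} : Multiset ℕ) = {1, N, q}) ∧
    ¬ ∃ ψ : ℕ → ℤ, MemT t.1 t.2.1 ψ ∧ Wpsi ψ (t.1 : ℤ) (t.2.1 : ℤ) ≠ 0 ∧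
      dNorm ψ < (t.2.2 : ℝ) ^ η}.Finite

/-!
Let `aⁿ + bⁿ = cⁿ` with `a`, `b`, `c` coprime, and let `ψ ∈ 𝒯(aⁿ, bⁿ)`. Additivity of `d^ψ` gives
`W(aⁿ, bⁿ) = W(aⁿ, cⁿ)`, and the power rule turns this into `bⁿ⁻¹ W(a, b) = cⁿ⁻¹ W(a, c)`, so
`cⁿ⁻¹ ∣ W(a, b)`. If `a`, `b` are `ψ`-independent then `cⁿ⁻¹ ≤ |W(a, b)|`, whereas
`|W(a, b)| ≤ c³ ‖ψ‖` because `|d^ψ(m)| ≤ Ω(m) (m/2) ‖ψ‖` and `Ω(m) ≤ m`. Hence `‖ψ‖ ≥ cⁿ⁻⁴`, which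
for large `n` is incompatible with `‖ψ‖ < c^(nη)`.
-/

open scoped ArithmeticFunction.Omega

section PowerRule

variable (ψ : ℕ → ℤ) (a b : ℤ) (n : ℕ)

lemma dpsi_pow : dpsi ψ (a ^ n) = n * a ^ (n - 1) * dpsi ψ a := by
  obtain _ | m := n
  · simp [dpsi]
  simp only [dpsi]
  rw [Int.natAbs_pow, Nat.primeFactors_pow _ m.succ_ne_zero, mul_sum]
  refine sum_congr rfl fun p hp => ?_
  have hpa : (p : ℤ) ∣ a := Int.natCast_dvd.2 (Nat.dvd_of_mem_primeFactors hp)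
  rw [Nat.add_sub_cancel, pow_succ, Int.mul_ediv_assoc _ hpa, Nat.factorization_pow]
  simp only [Finsupp.smul_apply, smul_eq_mul, Nat.cast_mul]
  ring

lemma Wpsi_pow : Wpsi ψ (a ^ n) (b ^ n) = n * (a * b) ^ (n - 1) * Wpsi ψ a b := by
  obtain _ | m := n
  · simp [Wpsi, dpsi]
  simp only [Wpsi, dpsi_pow, Nat.add_sub_cancel]
  ring

end PowerRule

lemma Wpsi_add_right {ψ : ℕ → ℤ} {a b : ℤ} (h : dpsi ψ (a + b) = dpsi ψ a + dpsi ψ b) :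
    Wpsi ψ a (a + b) = Wpsi ψ a b := by
  simp only [Wpsi, h]
  ring

lemma pow_dvd_Wpsi {ψ : ℕ → ℤ} {a b c : ℤ} {n : ℕ} (hn : n ≠ 0) (ha : a ≠ 0)
    (hbc : IsCoprime b c) (heq : a ^ n + b ^ n = c ^ n)
    (hadd : dpsi ψ (a ^ n + b ^ n) = dpsi ψ (a ^ n) + dpsi ψ (b ^ n)) :
    c ^ (n - 1) ∣ Wpsi ψ a b := by
  have hW : (n : ℤ) * (a * c) ^ (n - 1) * Wpsi ψ a c = n * (a * b) ^ (n - 1) * Wpsi ψ a b := by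
    rw [← Wpsi_pow, ← Wpsi_pow, ← heq, Wpsi_add_right hadd]
  have hcancel : c ^ (n - 1) * Wpsi ψ a c = b ^ (n - 1) * Wpsi ψ a b := by
    have hna : (n : ℤ) * a ^ (n - 1) ≠ 0 := by positivity
    refine mul_left_cancel₀ hna ?_
    linear_combination hW
  exact hbc.symm.pow.dvd_of_dvd_mul_left (Dvd.intro _ hcancel)

lemma two_pow_cardFactors_le {n : ℕ} (hn : n ≠ 0) : 2 ^ Ω n ≤ n := by
  rw [ArithmeticFunction.cardFactors_apply]
  calc 2 ^ n.primeFactorsList.length ≤ n.primeFactorsList.prod :=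
        List.pow_card_le_prod _ _ fun p hp => (Nat.prime_of_mem_primeFactorsList hp).two_le
    _ = n := Nat.prod_primeFactorsList hn

lemma cardFactors_le_self (n : ℕ) : Ω n ≤ n := by
  obtain rfl | hn := eq_or_ne n 0
  · simp
  · exact Nat.lt_two_pow_self.le.trans (two_pow_cardFactors_le hn)

namespace IsDeriv

variable {ψ : ℕ → ℤ}

lemma abs_le_dNorm (hψ : IsDeriv ψ) (p : ℕ) : |(ψ p : ℝ)| ≤ dNorm ψ := by
  obtain ⟨-, B, hB⟩ := hψ
  refine le_ciSup (f := fun p : ℕ => |(ψ p : ℝ)|) ⟨(B : ℝ), ?_⟩ p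
  rintro _ ⟨q, rfl⟩
  simpa only [← Int.cast_abs] using Int.cast_le.2 (hB q)

lemma dNorm_nonneg (hψ : IsDeriv ψ) : 0 ≤ dNorm ψ :=
  (abs_nonneg _).trans (hψ.abs_le_dNorm 0)

lemma abs_dpsi_le_cardFactors_mul (hψ : IsDeriv ψ) (n : ℤ) :
    |(dpsi ψ n : ℝ)| ≤ Ω n.natAbs * (|(n : ℝ)| / 2 * dNorm ψ) := by
  have hterm : ∀ p ∈ n.natAbs.primeFactors,
      |((n / p * n.natAbs.factorization p * ψ p : ℤ) : ℝ)|
        ≤ n.natAbs.factorization p * (|(n : ℝ)| / 2 * dNorm ψ) := by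
    intro p hp
    have hpn : (p : ℤ) ∣ n := Int.natCast_dvd.2 (Nat.dvd_of_mem_primeFactors hp)
    have hp2 : (2 : ℝ) ≤ p := by exact_mod_cast (Nat.prime_of_mem_primeFactors hp).two_le
    have hcast : ((n / p : ℤ) : ℝ) = n / p := by
      rw [Int.cast_div hpn (by rw [Int.cast_natCast]; positivity), Int.cast_natCast]
    have hdiv : |(n : ℝ) / p| ≤ |(n : ℝ)| / 2 := by
      rw [abs_div, Nat.abs_cast]
      gcongr
    calc |((n / p * n.natAbs.factorization p * ψ p : ℤ) : ℝ)|
        = n.natAbs.factorization p * (|(n : ℝ) / p| * |(ψ p : ℝ)|) := by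
          rw [Int.cast_mul, Int.cast_mul, hcast, Int.cast_natCast, abs_mul, abs_mul, Nat.abs_cast]
          ring
      _ ≤ _ := by
          gcongr
          exact hψ.abs_le_dNorm p
  have hΩ : (Ω n.natAbs : ℝ) = ∑ p ∈ n.natAbs.primeFactors, (n.natAbs.factorization p : ℝ) := by
    rw [ArithmeticFunction.cardFactors_eq_sum_factorization]
    exact Nat.cast_sum _ _
  rw [hΩ, sum_mul, dpsi, Int.cast_sum]
  exact (abs_sum_le_sum_abs _ _).trans (sum_le_sum hterm)

lemma abs_dpsi_le (hψ : IsDeriv ψ) (n : ℤ) :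
    |(dpsi ψ n : ℝ)| ≤ (n : ℝ) ^ 2 / 2 * dNorm ψ := by
  have hΩ : (Ω n.natAbs : ℝ) ≤ |(n : ℝ)| := by
    rw [← Int.cast_abs, ← Nat.cast_natAbs]
    exact_mod_cast cardFactors_le_self n.natAbs
  have hN := hψ.dNorm_nonneg
  calc |(dpsi ψ n : ℝ)| ≤ Ω n.natAbs * (|(n : ℝ)| / 2 * dNorm ψ) :=
        hψ.abs_dpsi_le_cardFactors_mul n
    _ ≤ |(n : ℝ)| * (|(n : ℝ)| / 2 * dNorm ψ) := by gcongr
    _ = (n : ℝ) ^ 2 / 2 * dNorm ψ := by rw [← sq_abs (n : ℝ)]; ring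

lemma abs_Wpsi_le (hψ : IsDeriv ψ) {a b c : ℤ} (ha : |a| ≤ c) (hb : |b| ≤ c) :
    |(Wpsi ψ a b : ℝ)| ≤ (c : ℝ) ^ 3 * dNorm ψ := by
  have hN := hψ.dNorm_nonneg
  have ha' : |(a : ℝ)| ≤ c := by exact_mod_cast ha
  have hb' : |(b : ℝ)| ≤ c := by exact_mod_cast hb
  have hc : (0 : ℝ) ≤ c := (abs_nonneg _).trans ha'
  have hd : ∀ x : ℤ, |(x : ℝ)| ≤ c → |(dpsi ψ x : ℝ)| ≤ (c : ℝ) ^ 2 / 2 * dNorm ψ :=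
    fun x hx => (hψ.abs_dpsi_le x).trans <| by
      rw [← sq_abs (x : ℝ)]
      gcongr
  calc |(Wpsi ψ a b : ℝ)| = |(a : ℝ) * dpsi ψ b - b * dpsi ψ a| := by simp [Wpsi]
    _ ≤ |(a : ℝ)| * |(dpsi ψ b : ℝ)| + |(b : ℝ)| * |(dpsi ψ a : ℝ)| := by
        rw [← abs_mul, ← abs_mul]
        exact abs_sub _ _
    _ ≤ c * ((c : ℝ) ^ 2 / 2 * dNorm ψ) + c * ((c : ℝ) ^ 2 / 2 * dNorm ψ) := by
        gcongr
        exacts [hd b hb', hd a ha']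
    _ = (c : ℝ) ^ 3 * dNorm ψ := by ring

end IsDeriv

lemma MemT.pow_le_mul_dNorm {ψ : ℕ → ℤ} {a b c n : ℕ} (hn : n ≠ 0) (ha : a ≠ 0)
    (hbc : Nat.Coprime b c) (heq : a ^ n + b ^ n = c ^ n) (hψ : MemT (a ^ n) (b ^ n) ψ)
    (hW : Wpsi ψ ((a ^ n : ℕ) : ℤ) ((b ^ n : ℕ) : ℤ) ≠ 0) :
    (c : ℝ) ^ n ≤ (c : ℝ) ^ 4 * dNorm ψ := by
  obtain ⟨hderiv, -, hadd⟩ := hψ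
  push_cast at hadd hW
  have hdvd : (c : ℤ) ^ (n - 1) ∣ Wpsi ψ a b :=
    pow_dvd_Wpsi hn (by exact_mod_cast ha) (Nat.isCoprime_iff_coprime.2 hbc)
      (by exact_mod_cast heq) hadd
  have hWab : Wpsi ψ a b ≠ 0 := by
    rw [Wpsi_pow] at hW
    exact right_ne_zero_of_mul hW
  have ha_le : a ≤ c := le_of_pow_le_pow_left₀ hn c.zero_le (heq ▸ Nat.le_add_right _ _)
  have hb_le : b ≤ c := le_of_pow_le_pow_left₀ hn c.zero_le (heq ▸ Nat.le_add_left _ _)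
  have hlower : (c : ℝ) ^ (n - 1) ≤ |(Wpsi ψ a b : ℝ)| := by
    exact_mod_cast Int.le_of_dvd (abs_pos.2 hWab) ((dvd_abs _ _).2 hdvd)
  have hupper : |(Wpsi ψ a b : ℝ)| ≤ (c : ℝ) ^ 3 * dNorm ψ := by
    exact_mod_cast hderiv.abs_Wpsi_le (c := c) (by simpa using ha_le) (by simpa using hb_le)
  calc (c : ℝ) ^ n = c * (c : ℝ) ^ (n - 1) := (mul_pow_sub_one hn _).symm
    _ ≤ c * ((c : ℝ) ^ 3 * dNorm ψ) := by gcongr; exact hlower.trans hupper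
    _ = (c : ℝ) ^ 4 * dNorm ψ := by ring

lemma SDC.exists_forall_exists_memT {η : ℝ} (h : SDC η) :
    ∃ M : ℕ, ∀ a b c : ℕ, 0 < a → 0 < b → Nat.Coprime a b → a + b = c → M < c →
      (∀ q ∈ ({a, b, c} : Multiset ℕ), ¬ q.Prime) →
      ∃ ψ : ℕ → ℤ, MemT a b ψ ∧ Wpsi ψ (a : ℤ) (b : ℤ) ≠ 0 ∧ dNorm ψ < (c : ℝ) ^ η := by
  obtain ⟨M, hM⟩ := (h.image fun t : ℕ × ℕ × ℕ => t.2.2).bddAbove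
  refine ⟨M, fun a b c ha hb hab hsum hMc hprime => ?_⟩
  by_contra hψ
  refine hMc.not_ge (hM ⟨(a, b, c), ⟨ha, hb, hsum, hab, ?_, hψ⟩, rfl⟩)
  rintro ⟨N, q, hq, htriple⟩
  have hmem : q ∈ ({a, b, c} : Multiset ℕ) := htriple ▸ by simp
  exact hprime q hmem hq

lemma mul_one_sub_lt_of_pow_lt {x η : ℝ} {n k : ℕ} (hx : 1 < x)
    (h : x ^ n < x ^ k * (x ^ n) ^ η) : n * (1 - η) < k := by
  have hx0 : 0 < x := one_pos.trans hx
  have hrpow : x ^ (n : ℝ) < x ^ (k + n * η) := by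
    rwa [Real.rpow_add hx0, Real.rpow_mul hx0.le, Real.rpow_natCast, Real.rpow_natCast]
  linarith [(Real.rpow_lt_rpow_left_iff hx).1 hrpow]

/-- Asymptotic FLT conditional on the Small Derivatives Conjecture. -/
theorem asymptotic_flt_of_sdc (η : ℝ) (h0 : 0 < η) (h1 : η < 1) (hSDC : SDC η) :
    ∃ n₀ : ℕ, 0 < n₀ ∧ ∀ n : ℕ, n₀ ≤ n → ∀ a b c : ℕ, 0 < a → 0 < b → 0 < c →
      Nat.Coprime a b → Nat.Coprime a c → Nat.Coprime b c →
      a ^ n + b ^ n ≠ c ^ n := by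
  obtain ⟨M, hM⟩ := hSDC.exists_forall_exists_memT
  have hη : 0 < 1 - η := sub_pos.2 h1
  have hfour : (4 : ℝ) < 4 / (1 - η) := by rw [lt_div_iff₀ hη]; linarith
  refine ⟨max M ⌈4 / (1 - η)⌉₊, lt_max_of_lt_right (Nat.ceil_pos.2 (by positivity)), ?_⟩
  intro n hn a b c ha hb _ hab _ hbc heq
  obtain ⟨hMn, hceil⟩ := max_le_iff.1 hn
  have hdiv : 4 / (1 - η) ≤ n := Nat.ceil_le.1 hceil
  have hn4 : 4 < n := by exact_mod_cast hfour.trans_le hdiv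
  have hac : a < c :=
    lt_of_pow_lt_pow_left₀ n c.zero_le (heq ▸ Nat.lt_add_of_pos_right (Nat.pow_pos hb))
  have hc : 1 < c := by omega
  obtain ⟨ψ, hψ, hW, hsmall⟩ := hM _ _ _ (Nat.pow_pos ha) (Nat.pow_pos hb) (hab.pow n n) heq
    (hMn.trans_lt (Nat.lt_pow_self hc))
    (by simp [Nat.Prime.not_prime_pow (by omega : 2 ≤ n)])
  have hlarge : (c : ℝ) ^ n ≤ (c : ℝ) ^ 4 * dNorm ψ :=
    hψ.pow_le_mul_dNorm (by omega) ha.ne' hbc heq hW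
  have hlt : (c : ℝ) ^ n < (c : ℝ) ^ 4 * ((c : ℝ) ^ n) ^ η :=
    hlarge.trans_lt (by gcongr; exact_mod_cast hsmall)
  have hbound : n * (1 - η) < (4 : ℕ) := mul_one_sub_lt_of_pow_lt (by exact_mod_cast hc) hlt
  exact hbound.not_ge ((div_le_iff₀ hη).1 hdiv)
end

section
/- Let K be a field and m < n positive integers. Let v₁, …, v_m ∈ Kⁿ be vectors that are linearly independent over K, with coordinates v_i = (v_{i,1}, …, v_{i,n}). Let j₀ ∈ {1, …, n} be an index such that v_{i,j₀} ≠ 0 for some i. Then there is an injective function τ : {1, …, m} → {1, …, n} such that j₀ lies in the image of τ and v_{i,τ(i)} ≠ 0 for each 1 ≤ i ≤ m. -/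
open Finset

/-!
Vectors supported on a set `t` of coordinates lie in a free module of rank `#t`, so among linearly
independent vectors any `k` of them have at least `k` coordinates in the union of their supports.
This is Hall's condition, and the marriage theorem selects distinct nonzero coordinates. If the
selection misses the prescribed coordinate `j₀`, moving the choice for a vector that is nonzero at
`j₀` to `j₀` creates no collision.
-/

theorem injective_update_of_notMem_range {α β : Type*} [DecidableEq α] {f : α → β}
    (hf : Function.Injective f) {b : β} (hb : b ∉ Set.range f) (a : α) :
    Function.Injective (Function.update f a b) := by
  intro x y hxy
  grind [Function.update_apply]

theorem exists_injective_rel_mem_range {α β : Type*} {r : α → β → Prop} {f : α → β}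
    (hf : Function.Injective f) (hr : ∀ x, r x (f x)) {a : α} {b : β} (hab : r a b) :
    ∃ g : α → β, Function.Injective g ∧ b ∈ Set.range g ∧ ∀ x, r x (g x) := by
  classical
  by_cases hb : b ∈ Set.range f
  · exact ⟨f, hf, hb, hr⟩
  · refine ⟨Function.update f a b, injective_update_of_notMem_range hf hb a,
      ⟨a, Function.update_self a b f⟩, ?_⟩
    rw [Function.forall_update_iff f fun x y ↦ r x y]
    exact ⟨hab, fun x _ ↦ hr x⟩

section StrongRankCondition

variable {R ι κ : Type*} [Semiring R] [StrongRankCondition R] {v : ι → κ →₀ R}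

theorem card_le_card_of_linearIndependent_of_support_subset [Fintype ι]
    (hv : LinearIndependent R v) {t : Finset κ} (ht : ∀ i, (v i).support ⊆ t) :
    Fintype.card ι ≤ #t := by
  classical
  let w : Finset (κ →₀ R) := t.image fun j ↦ Finsupp.single j 1
  have hspan : Set.range v ⊆ Submodule.span R (w : Set (κ →₀ R)) := by
    rw [coe_image, ← Finsupp.supported_eq_span_single]
    rintro _ ⟨i, rfl⟩
    exact (Finsupp.mem_supported R _).2 (coe_subset.2 (ht i))
  calc
    Fintype.card ι ≤ #w := by
      simpa using linearIndependent_le_span' v hv w hspan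
    _ ≤ #t := card_image_le

theorem card_le_card_biUnion_support_of_linearIndependent [DecidableEq κ]
    (hv : LinearIndependent R v) (s : Finset ι) :
    #s ≤ #(s.biUnion fun i ↦ (v i).support) := by
  rw [← Fintype.card_coe s]
  exact card_le_card_of_linearIndependent_of_support_subset
    (hv.comp _ Subtype.val_injective) fun i ↦ subset_biUnion_of_mem (fun i ↦ (v i).support) i.2

theorem exists_injective_apply_ne_zero_of_linearIndependent (hv : LinearIndependent R v) :
    ∃ τ : ι → κ, Function.Injective τ ∧ ∀ i, v i (τ i) ≠ 0 := by
  classical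
  simpa only [Finsupp.mem_support_iff] using
    (all_card_le_biUnion_card_iff_exists_injective fun i ↦ (v i).support).1
      (card_le_card_biUnion_support_of_linearIndependent hv)

theorem exists_injective_nonzero_selection_general (hv : LinearIndependent R v) {j₀ : κ}
    (hj : ∃ i, v i j₀ ≠ 0) :
    ∃ τ : ι → κ, Function.Injective τ ∧ (∃ i, τ i = j₀) ∧ ∀ i, v i (τ i) ≠ 0 := by
  obtain ⟨i₀, hi₀⟩ := hj
  obtain ⟨τ, hτ, hne⟩ := exists_injective_apply_ne_zero_of_linearIndependent hv
  exact exists_injective_rel_mem_range (r := fun i j ↦ v i j ≠ 0) hτ hne hi₀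

end StrongRankCondition

/-- Selection of nonzero entries along an injection, covering a prescribed column. -/
theorem exists_injective_nonzero_selection (K : Type*) [Field K] (m n : ℕ)
    (hm : 0 < m) (hmn : m < n) (v : Fin m → Fin n → K)
    (hv : LinearIndependent K v) (j₀ : Fin n) (hj : ∃ i, v i j₀ ≠ 0) :
    ∃ τ : Fin m → Fin n, Function.Injective τ ∧ (∃ i, τ i = j₀) ∧
      ∀ i, v i (τ i) ≠ 0 := by
  exact exists_injective_nonzero_selection_general
    (hv.map' (Finsupp.linearEquivFunOnFinite K K (Fin n)).symm.toLinearMap (LinearEquiv.ker _)) hj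
end

section
/- Key lower bound: let a, b, c be pairwise coprime positive integers with a + b = c, not, up to order, of the form (1,8,9) or (1, N, q) with q prime. Set r = ω(abc) − 1. Let ψ₁, …, ψ_{r−1} ∈ 𝒯°(a,b) be ℤ-linearly independent derivations (so a and b are ψ_i-dependent for each i). Suppose there is a real number M with 1 < M < 2 and c < rad(abc)^M, and set μ = (2 − M)/(4M). Then ∏_{i=1}^{r−1} ‖ψ_i‖ ≥ c^μ / ∏_{p | abc} v_p(abc). -/
open Finset

/-!
If `ψ ∈ 𝒯°(a,b)`, then `a`, `b` and `c = a + b` share one logarithmic derivative `d^ψ(n) / n`, and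
it is an integer because `a` and `b` are coprime. Comparing `p`-adic valuations, `p` divides
`v_p(abc)·ψ(p)` for every prime `p ∣ abc`, so `p ≤ v_p(abc)·‖ψ‖` unless `ψ(p) = 0`.

Let `2` and `q` divide different members of the triple. An element of `𝒯°(a,b)` supported on
`{2, q}` vanishes: the third member has logarithmic derivative `0`, hence so do the other two.
So the matrix of values of the `ψ_i` at the remaining primes is nonsingular, and a nonzero term of
its determinant gives `rad(abc) ≤ 2q·∏ v_p(abc)·∏ ‖ψ_i‖`.

It remains to choose `q` with `16q⁴ ≤ rad(abc)²·c`. If the product of the two odd members is not a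
prime power, take its least prime factor. Otherwise the triple consists of `1`, an even number and a
power `q^k` with `k > 1`, and the even number has an odd prime factor because `2^m ± 1 = q^k` has no
solution other than `8 + 1 = 9`.
-/

/-- The rational logarithmic derivative `d^ψ(n) / n = Σ_p v_p(n)·ψ(p)/p`, which turns the
Leibniz rule for `d^ψ` into additivity. -/
noncomputable def logDpsi (ψ : ℕ → ℤ) (n : ℕ) : ℚ :=
  ∑ p ∈ n.primeFactors, ((n.factorization p * ψ p : ℤ) : ℚ) / p

section LogDerivative

variable {ψ : ℕ → ℤ} {m n p : ℕ}

theorem dpsi_natCast (ψ : ℕ → ℤ) (n : ℕ) : (dpsi ψ n : ℚ) = n * logDpsi ψ n := by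
  simp only [dpsi, logDpsi, Int.natAbs_natCast, Int.cast_sum, Finset.mul_sum]
  refine Finset.sum_congr rfl fun p hp ↦ ?_
  have hdvd : (p : ℤ) ∣ n := by exact_mod_cast Nat.dvd_of_mem_primeFactors hp
  have hp0 : ((p : ℤ) : ℚ) ≠ 0 := by exact_mod_cast (Nat.prime_of_mem_primeFactors hp).ne_zero
  push_cast [Int.cast_div hdvd hp0]
  ring

theorem logDpsi_mul (ψ : ℕ → ℤ) (hm : m ≠ 0) (hn : n ≠ 0) :
    logDpsi ψ (m * n) = logDpsi ψ m + logDpsi ψ n := by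
  have h (k : ℕ) : logDpsi ψ k = k.factorization.sum fun p v ↦ ((v * ψ p : ℤ) : ℚ) / p := rfl
  rw [h, h, h, Nat.factorization_mul hm hn]
  refine Finsupp.sum_add_index' (fun p ↦ by simp) fun p u v ↦ ?_
  push_cast
  ring

theorem logDpsi_eq_single (h : ∀ l ∈ n.primeFactors, l ≠ p → ψ l = 0) :
    logDpsi ψ n = n.factorization p * ψ p / p := by
  rw [logDpsi, Finset.sum_eq_single p (fun l hl hlp ↦ by simp [h l hl hlp])]
  · push_cast
    rfl
  · intro hp
    simp [Finsupp.notMem_support_iff.1 (Nat.support_factorization n ▸ hp)]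

theorem eq_zero_of_logDpsi_eq_zero (hp : p ∈ n.primeFactors)
    (h : ∀ l ∈ n.primeFactors, l ≠ p → ψ l = 0) (hn : logDpsi ψ n = 0) : ψ p = 0 := by
  obtain ⟨hpp, hpn, hn0⟩ := Nat.mem_primeFactors.1 hp
  simpa [logDpsi_eq_single h, hpp.ne_zero, (hpp.factorization_pos_of_dvd hn0 hpn).ne'] using hn

/-- All terms but the one at `p` are `p`-adically integral. -/
theorem dvd_of_sum_div_eq_intCast {S : Finset ℕ} (hS : ∀ q ∈ S, q.Prime) {f : ℕ → ℤ} {k : ℤ}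
    (h : ∑ q ∈ S, (f q : ℚ) / q = k) (hp : p ∈ S) : (p : ℤ) ∣ f p := by
  have : Fact p.Prime := ⟨hS p hp⟩
  have hrest : padicNorm p (∑ q ∈ S.erase p, (f q : ℚ) / q) ≤ 1 := by
    refine padicNorm.sum_le' (fun q hq ↦ ?_) zero_le_one
    obtain ⟨hqp, hqS⟩ := Finset.mem_erase.1 hq
    have : Fact q.Prime := ⟨hS q hqS⟩
    rw [padicNorm.div, padicNorm.padicNorm_of_prime_of_ne hqp.symm, div_one]
    exact padicNorm.of_int _
  have hterm : (f p : ℚ) / p = k - ∑ q ∈ S.erase p, (f q : ℚ) / q := by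
    rw [← h, ← Finset.add_sum_erase S _ hp, add_sub_cancel_right]
  have hle : padicNorm p ((f p : ℚ) / p) ≤ 1 :=
    hterm ▸ padicNorm.sub.trans (max_le (padicNorm.of_int k) hrest)
  have hp0 : (0 : ℚ) < p := by exact_mod_cast (hS p hp).pos
  rw [padicNorm.div, padicNorm.padicNorm_p_of_prime, div_inv_eq_mul, mul_comm,
    ← le_div_iff₀' hp0] at hle
  exact (padicNorm.int_lt_one_iff _).1
    (hle.trans_lt ((div_lt_one hp0).2 (mod_cast (hS p hp).one_lt)))

end LogDerivative

theorem dpsi_add (ψ φ : ℕ → ℤ) (n : ℤ) : dpsi (ψ + φ) n = dpsi ψ n + dpsi φ n := by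
  simp only [dpsi, Pi.add_apply, mul_add, Finset.sum_add_distrib]

theorem dpsi_smul (k : ℤ) (ψ : ℕ → ℤ) (n : ℤ) : dpsi (k • ψ) n = k * dpsi ψ n := by
  simp only [dpsi, Pi.smul_apply, smul_eq_mul, Finset.mul_sum]
  exact Finset.sum_congr rfl fun p _ ↦ by ring

theorem IsDeriv.add {ψ φ : ℕ → ℤ} (hψ : IsDeriv ψ) (hφ : IsDeriv φ) : IsDeriv (ψ + φ) := by
  obtain ⟨hψ0, B, hB⟩ := hψ
  obtain ⟨hφ0, C, hC⟩ := hφ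
  exact ⟨fun p hp ↦ by simp [hψ0 p hp, hφ0 p hp], B + C,
    fun p ↦ (abs_add_le _ _).trans (add_le_add (hB p) (hC p))⟩

theorem IsDeriv.smul {ψ : ℕ → ℤ} (k : ℤ) (hψ : IsDeriv ψ) : IsDeriv (k • ψ) := by
  obtain ⟨hψ0, B, hB⟩ := hψ
  refine ⟨fun p hp ↦ by simp [hψ0 p hp], |k| * B, fun p ↦ ?_⟩
  rw [Pi.smul_apply, smul_eq_mul, abs_mul]
  exact mul_le_mul_of_nonneg_left (hB p) (abs_nonneg k)

/-- `𝒯°(a,b)` as a `ℤ`-module of functions. -/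
def submoduleT0 (a b : ℕ) : Submodule ℤ (ℕ → ℤ) where
  carrier := {ψ | MemT0 a b ψ}
  zero_mem' := by simp [MemT0, MemT, IsDeriv, Wpsi, dpsi, show ∃ B : ℤ, 0 ≤ B from ⟨0, le_rfl⟩]
  add_mem' := by
    rintro ψ φ ⟨⟨hψ, hψs, hψd⟩, hψW⟩ ⟨⟨hφ, hφs, hφd⟩, hφW⟩
    refine ⟨⟨hψ.add hφ, fun p hp hpN ↦ by simp [hψs p hp hpN, hφs p hp hpN], ?_⟩, ?_⟩ <;>
      simp only [Wpsi, dpsi_add] at *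
    · linear_combination hψd + hφd
    · linear_combination hψW + hφW
  smul_mem' := by
    rintro k ψ ⟨⟨hψ, hψs, hψd⟩, hψW⟩
    refine ⟨⟨hψ.smul k, fun p hp hpN ↦ by simp [hψs p hp hpN], ?_⟩, ?_⟩ <;>
      simp only [Wpsi, dpsi_smul] at *
    · linear_combination k * hψd
    · linear_combination k * hψW

/-- The primes `p` and `q` divide `a * b * (a + b)`, but no single member of the triple
`(a, b, a + b)` is divisible by both. The triple is a multiset so that it can be rearranged by
rewriting. -/
structure SeparatedPrimes (a b p q : ℕ) : Prop where
  left_mem : p ∈ (a * b * (a + b)).primeFactors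
  right_mem : q ∈ (a * b * (a + b)).primeFactors
  not_dvd : ∀ n ∈ ({a, b, a + b} : Multiset ℕ), ¬ (p ∣ n ∧ q ∣ n)

namespace SeparatedPrimes

variable {a b p q : ℕ}

theorem symm (h : SeparatedPrimes a b p q) : SeparatedPrimes a b q p :=
  ⟨h.right_mem, h.left_mem, fun n hn hd ↦ h.not_dvd n hn hd.symm⟩

theorem exists_mem_left_dvd (h : SeparatedPrimes a b p q) :
    ∃ n ∈ ({a, b, a + b} : Multiset ℕ), n ≠ 0 ∧ p ∣ n := by
  obtain ⟨hp, hpN, hN⟩ := Nat.mem_primeFactors.1 h.left_mem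
  simp only [mul_ne_zero_iff] at hN
  simpa [hN.1.1, hN.1.2, hp.dvd_mul, or_assoc] using hpN

theorem ne (h : SeparatedPrimes a b p q) : p ≠ q := by
  obtain ⟨n, hn, -, hpn⟩ := h.exists_mem_left_dvd
  rintro rfl
  exact h.not_dvd n hn ⟨hpn, hpn⟩

theorem exists_mem_not_dvd (h : SeparatedPrimes a b p q) (hab : a.Coprime b) :
    ∃ n ∈ ({a, b, a + b} : Multiset ℕ), ¬ p ∣ n ∧ ¬ q ∣ n := by
  have hdvd {l : ℕ} (hl : l.Prime) :
      ¬ (l ∣ a ∧ l ∣ b) ∧ ¬ (l ∣ a ∧ l ∣ a + b) ∧ ¬ (l ∣ b ∧ l ∣ a + b) := by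
    have hlab : ¬ (l ∣ a ∧ l ∣ b) := fun h ↦ Nat.not_coprime_of_dvd_of_dvd hl.one_lt h.1 h.2 hab
    exact ⟨hlab, fun h ↦ hlab ⟨h.1, (Nat.dvd_add_right h.1).1 h.2⟩,
      fun h ↦ hlab ⟨(Nat.dvd_add_left h.1).1 h.2, h.1⟩⟩
  have := hdvd (Nat.prime_of_mem_primeFactors h.left_mem)
  have := hdvd (Nat.prime_of_mem_primeFactors h.right_mem)
  simp only [Multiset.insert_eq_cons, Multiset.mem_cons, Multiset.mem_singleton,
    exists_eq_or_imp, exists_eq_left]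
  tauto

end SeparatedPrimes

namespace MemT0

variable {a b : ℕ} {ψ : ℕ → ℤ}

theorem exists_logDpsi_eq_intCast (hψ : MemT0 a b ψ) (ha : 0 < a) (hb : 0 < b)
    (hab : a.Coprime b) :
    ∃ k : ℤ, ∀ n ∈ ({a, b, a + b} : Multiset ℕ), logDpsi ψ n = k := by
  obtain ⟨⟨-, -, hadd⟩, hW⟩ := hψ
  rw [Wpsi, sub_eq_zero] at hW
  obtain ⟨k, hk⟩ : (a : ℤ) ∣ dpsi ψ a :=
    (Nat.isCoprime_iff_coprime.2 hab).dvd_of_dvd_mul_left (Dvd.intro _ hW)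
  have ha0 : (a : ℚ) ≠ 0 := by positivity
  have hb0 : (b : ℚ) ≠ 0 := by positivity
  have hab0 : (a + b : ℚ) ≠ 0 := by positivity
  have hdb : dpsi ψ b = b * k := by
    refine mul_left_cancel₀ (Nat.cast_ne_zero.2 ha.ne' : (a : ℤ) ≠ 0) ?_
    rw [hW, hk]
    ring
  have hdab : dpsi ψ ((a + b : ℕ) : ℤ) = (a + b) * k := by
    rw [Nat.cast_add, hadd, hk, hdb]
    ring
  have hcancel {n : ℕ} (hn : n ≠ 0) (hd : dpsi ψ n = n * k) : logDpsi ψ n = k := by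
    refine mul_left_cancel₀ (Nat.cast_ne_zero.2 hn : (n : ℚ) ≠ 0) ?_
    rw [← dpsi_natCast, hd]
    push_cast
    rfl
  refine ⟨k, fun n hn ↦ ?_⟩
  simp only [Multiset.insert_eq_cons, Multiset.mem_cons, Multiset.mem_singleton] at hn
  obtain rfl | rfl | rfl := hn
  · exact hcancel ha.ne' hk
  · exact hcancel hb.ne' hdb
  · exact hcancel (by positivity) (mod_cast hdab)

theorem dvd_factorization_mul (hψ : MemT0 a b ψ) (ha : 0 < a) (hb : 0 < b)
    (hab : a.Coprime b) {p : ℕ} (hp : p ∈ (a * b * (a + b)).primeFactors) :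
    (p : ℤ) ∣ (a * b * (a + b)).factorization p * ψ p := by
  obtain ⟨k, hk⟩ := hψ.exists_logDpsi_eq_intCast ha hb hab
  have hsum : logDpsi ψ (a * b * (a + b)) = (3 * k : ℤ) := by
    rw [logDpsi_mul ψ (by positivity) (by positivity), logDpsi_mul ψ ha.ne' hb.ne',
      hk a (by simp), hk b (by simp), hk (a + b) (by simp)]
    push_cast
    ring
  exact dvd_of_sum_div_eq_intCast (fun q hq ↦ Nat.prime_of_mem_primeFactors hq) hsum hp

theorem apply_eq_zero_of_notMem (hψ : MemT0 a b ψ) (ha : 0 < a) (hb : 0 < b) {l : ℕ}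
    (hl : l ∉ (a * b * (a + b)).primeFactors) : ψ l = 0 := by
  obtain ⟨⟨⟨hprime, -⟩, hsupp, -⟩, -⟩ := hψ
  by_cases hlP : l.Prime
  · exact hsupp l hlP fun hlN ↦ hl (Nat.mem_primeFactors.2 ⟨hlP, hlN, by positivity⟩)
  · exact hprime l hlP

/-- The member of the triple divisible by neither prime has logarithmic derivative `0`, hence so
do the other two. -/
theorem eq_zero_of_separatedPrimes (hψ : MemT0 a b ψ) (ha : 0 < a) (hb : 0 < b)
    (hab : a.Coprime b) {p q : ℕ} (hpq : SeparatedPrimes a b p q)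
    (h0 : ∀ l, l ≠ p → l ≠ q → ψ l = 0) : ψ = 0 := by
  obtain ⟨k, hk⟩ := hψ.exists_logDpsi_eq_intCast ha hb hab
  have hk0 : (k : ℚ) = 0 := by
    obtain ⟨n, hn, hpn, hqn⟩ := hpq.exists_mem_not_dvd hab
    rw [← hk n hn, logDpsi]
    refine Finset.sum_eq_zero fun l hl ↦ ?_
    have hln := Nat.dvd_of_mem_primeFactors hl
    simp [h0 l (by rintro rfl; exact hpn hln) (by rintro rfl; exact hqn hln)]
  have hvanish {r s : ℕ} (hrs : SeparatedPrimes a b r s)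
      (h0 : ∀ l, l ≠ r → l ≠ s → ψ l = 0) : ψ r = 0 := by
    obtain ⟨n, hn, hn0, hrn⟩ := hrs.exists_mem_left_dvd
    have hr : r ∈ n.primeFactors :=
      Nat.mem_primeFactors.2 ⟨Nat.prime_of_mem_primeFactors hrs.left_mem, hrn, hn0⟩
    refine eq_zero_of_logDpsi_eq_zero hr (fun l hl hlr ↦ h0 l hlr ?_) ((hk n hn).trans hk0)
    rintro rfl
    exact hrs.not_dvd n hn ⟨hrn, Nat.dvd_of_mem_primeFactors hl⟩
  funext l
  by_cases hlp : l = p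
  · exact hlp ▸ hvanish hpq h0
  by_cases hlq : l = q
  · exact hlq ▸ hvanish hpq.symm fun l hq hp ↦ h0 l hp hq
  exact h0 l hlp hlq

end MemT0

section DeterminantBound

theorem one_le_factorization {n p : ℕ} (hp : p ∈ n.primeFactors) :
    (1 : ℝ) ≤ n.factorization p := by
  obtain ⟨hpP, hpn, hn⟩ := Nat.mem_primeFactors.1 hp
  exact mod_cast hpP.factorization_pos_of_dvd hn hpn

/-- The matrix `v` has nonzero determinant, so some term of the Leibniz expansion is nonzero. -/
theorem exists_equiv_forall_apply_ne_zero {R ι κ : Type*} [CommRing R] [IsDomain R] [Fintype ι]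
    [Fintype κ] (hcard : Fintype.card ι = Fintype.card κ) {v : ι → κ → R}
    (hv : LinearIndependent R v) : ∃ e : ι ≃ κ, ∀ i, v i (e i) ≠ 0 := by
  classical
  let e₀ : ι ≃ κ := Fintype.equivOfCardEq hcard
  let A : Matrix κ κ R := Matrix.of fun i ↦ v (e₀.symm i)
  have hA : A.det ≠ 0 := fun h ↦ by
    obtain ⟨w, hw, hwA⟩ := Matrix.exists_vecMul_eq_zero_iff.2 h
    have hrow : LinearIndependent R A.row := hv.comp _ e₀.symm.injective
    have hinj := Matrix.vecMul_injective_iff.2 hrow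
    exact hw (hinj (hwA.trans (Matrix.zero_vecMul A).symm))
  rw [Matrix.det_apply] at hA
  obtain ⟨σ, -, hσ⟩ := Finset.exists_ne_zero_of_sum_ne_zero hA
  have hprod : ∏ i, A (σ i) i ≠ 0 := fun h ↦ hσ (by rw [h, smul_zero])
  refine ⟨e₀.trans σ.symm, fun i ↦ ?_⟩
  simpa [A] using Finset.prod_ne_zero_iff.1 hprod (σ.symm (e₀ i)) (Finset.mem_univ _)

theorem IsDeriv.abs_le_dNorm_s16 {ψ : ℕ → ℤ} (hψ : IsDeriv ψ) (p : ℕ) : |(ψ p : ℝ)| ≤ dNorm ψ := by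
  obtain ⟨-, B, hB⟩ := hψ
  exact le_ciSup (f := fun p ↦ |(ψ p : ℝ)|)
    ⟨B, Set.forall_mem_range.2 fun p ↦ mod_cast hB p⟩ p

theorem dNorm_nonneg (ψ : ℕ → ℤ) : 0 ≤ dNorm ψ := Real.iSup_nonneg fun _ ↦ abs_nonneg _

variable {a b : ℕ}

theorem MemT0.le_factorization_mul_dNorm {ψ : ℕ → ℤ} (hψ : MemT0 a b ψ) (ha : 0 < a)
    (hb : 0 < b) (hab : a.Coprime b) {p : ℕ} (hp : p ∈ (a * b * (a + b)).primeFactors)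
    (h : ψ p ≠ 0) : (p : ℝ) ≤ (a * b * (a + b)).factorization p * dNorm ψ := by
  obtain ⟨hpP, hpN, hN⟩ := Nat.mem_primeFactors.1 hp
  have hv : ((a * b * (a + b)).factorization p : ℤ) ≠ 0 :=
    mod_cast (hpP.factorization_pos_of_dvd hN hpN).ne'
  have hle : (p : ℤ) ≤ (a * b * (a + b)).factorization p * |ψ p| := by
    have := Int.le_of_dvd (abs_pos.2 (mul_ne_zero hv h))
      ((dvd_abs _ _).2 (hψ.dvd_factorization_mul ha hb hab hp))
    rwa [abs_mul, Nat.abs_cast] at this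
  calc (p : ℝ) ≤ (a * b * (a + b)).factorization p * |(ψ p : ℝ)| := mod_cast hle
    _ ≤ _ := by gcongr; exact hψ.1.1.abs_le_dNorm_s16 p

variable {ι : Type*} [Fintype ι] {ψs : ι → ℕ → ℤ} {p q : ℕ}

theorem exists_equiv_sdiff_pair_forall_apply_ne_zero (ha : 0 < a) (hb : 0 < b)
    (hab : a.Coprime b) (hcard : Fintype.card ι = #(a * b * (a + b)).primeFactors - 2)
    (hψs : ∀ i, MemT0 a b (ψs i)) (hLI : LinearIndependent ℤ ψs)
    (hpq : SeparatedPrimes a b p q) :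
    ∃ e : ι ≃ ↥((a * b * (a + b)).primeFactors \ {p, q}), ∀ i, ψs i (e i) ≠ 0 := by
  set S := (a * b * (a + b)).primeFactors \ {p, q}
  have hsub : {p, q} ⊆ (a * b * (a + b)).primeFactors :=
    Finset.insert_subset hpq.left_mem (Finset.singleton_subset_iff.2 hpq.right_mem)
  have hcardS : Fintype.card ι = Fintype.card S := by
    rw [hcard, Fintype.card_coe, Finset.card_sdiff_of_subset hsub, Finset.card_pair hpq.ne]
  have hker : Disjoint (Submodule.span ℤ (Set.range ψs))
      (LinearMap.ker (LinearMap.funLeft ℤ ℤ ((↑) : S → ℕ))) := by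
    have hspan : Submodule.span ℤ (Set.range ψs) ≤ submoduleT0 a b :=
      Submodule.span_le.2 (Set.range_subset_iff.2 hψs)
    refine Submodule.disjoint_def.2 fun ψ hψ hψS ↦ ?_
    obtain hψ : MemT0 a b ψ := hspan hψ
    refine hψ.eq_zero_of_separatedPrimes ha hb hab hpq fun l hlp hlq ↦ ?_
    by_cases hl : l ∈ S
    · exact congrFun (LinearMap.mem_ker.1 hψS) ⟨l, hl⟩
    · refine hψ.apply_eq_zero_of_notMem ha hb fun hlN ↦ hl (Finset.mem_sdiff.2 ⟨hlN, ?_⟩)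
      simp [hlp, hlq]
  exact exists_equiv_forall_apply_ne_zero hcardS (hLI.map hker)

theorem radN_le_mul_prod_dNorm (ha : 0 < a) (hb : 0 < b) (hab : a.Coprime b)
    (hcard : Fintype.card ι = #(a * b * (a + b)).primeFactors - 2)
    (hψs : ∀ i, MemT0 a b (ψs i)) (hLI : LinearIndependent ℤ ψs)
    (hpq : SeparatedPrimes a b p q) :
    (radN (a * b * (a + b)) : ℝ) ≤ p * q *
      ((∏ l ∈ (a * b * (a + b)).primeFactors, ((a * b * (a + b)).factorization l : ℝ)) *
        ∏ i, dNorm (ψs i)) := by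
  set N := a * b * (a + b)
  set S := N.primeFactors \ {p, q}
  obtain ⟨e, he⟩ : ∃ e : ι ≃ S, ∀ i, ψs i (e i) ≠ 0 :=
    exists_equiv_sdiff_pair_forall_apply_ne_zero ha hb hab hcard hψs hLI hpq
  have hS : S ⊆ N.primeFactors := Finset.sdiff_subset
  have hprod_equiv (f : ℕ → ℝ) : ∏ l ∈ S, f l = ∏ i, f (e i) := by
    rw [← Finset.prod_coe_sort, Equiv.prod_comp e fun l ↦ f l]
  have hrad : (radN N : ℝ) = p * q * ∏ l ∈ S, (l : ℝ) := by
    have hsub : {p, q} ⊆ N.primeFactors :=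
      Finset.insert_subset hpq.left_mem (Finset.singleton_subset_iff.2 hpq.right_mem)
    rw [radN, Nat.cast_prod, ← Finset.prod_sdiff hsub, Finset.prod_pair hpq.ne, mul_comm]
  have hfac : ∏ l ∈ S, (N.factorization l : ℝ) ≤ ∏ l ∈ N.primeFactors, (N.factorization l : ℝ) :=
    Finset.prod_le_prod_of_subset_of_one_le hS (fun _ _ ↦ by positivity)
      fun l hl _ ↦ one_le_factorization hl
  rw [hrad]
  gcongr
  calc ∏ l ∈ S, (l : ℝ) = ∏ i, (e i : ℝ) := hprod_equiv _
    _ ≤ ∏ i, N.factorization (e i) * dNorm (ψs i) :=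
      Finset.prod_le_prod (fun _ _ ↦ by positivity) fun i _ ↦
        (hψs i).le_factorization_mul_dNorm ha hb hab (hS (e i).2) (he i)
    _ = (∏ l ∈ S, (N.factorization l : ℝ)) * ∏ i, dNorm (ψs i) := by
      rw [Finset.prod_mul_distrib, hprod_equiv fun l ↦ N.factorization l]
    _ ≤ _ := by
      gcongr
      exact Finset.prod_nonneg fun i _ ↦ dNorm_nonneg _

end DeterminantBound

section PowersOfTwo

variable {k m q : ℕ}

theorem even_geom_sum_iff_of_odd {t : ℤ} (ht : Odd t) :
    Even (∑ i ∈ Finset.range k, t ^ i) ↔ Even k := by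
  induction k with
  | zero => simp
  | succ k ih =>
    rw [Finset.sum_range_succ, Int.even_add, ih, Nat.even_add_one]
    simp [Int.not_even_iff_odd.2 ht.pow]

/-- The cofactor `1 + t + ⋯ + t ^ (k - 1)` is odd, hence equal to `1`. -/
theorem pow_eq_self_of_sub_one_dvd_two_pow {t : ℤ} (ht : Odd t) (hk : Odd k)
    (h : t ^ k - 1 ∣ 2 ^ m) : t ^ k = t := by
  have hodd : Odd (∑ i ∈ Finset.range k, t ^ i) := by
    rwa [← Int.not_even_iff_odd, even_geom_sum_iff_of_odd ht, Nat.not_even_iff_odd]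
  have hunit : IsUnit (∑ i ∈ Finset.range k, t ^ i) :=
    (Int.isCoprime_two_right.2 hodd).pow_right.isUnit_of_dvd' dvd_rfl
      ((Dvd.intro _ (geom_sum_mul t k)).trans h)
  have hsum : ∑ i ∈ Finset.range k, t ^ i = 1 :=
    (Int.isUnit_iff.1 hunit).resolve_right fun h ↦ by linarith [hk.geom_sum_pos (x := t)]
  linarith [hsum ▸ geom_sum_mul t k]

theorem eq_two_of_mul_add_two_eq_two_pow {w : ℕ} (h : w * (w + 2) = 2 ^ m) : w = 2 := by
  obtain ⟨i, -, rfl⟩ := (Nat.dvd_prime_pow Nat.prime_two).1 (Dvd.intro _ h)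
  obtain ⟨l, -, hl⟩ := (Nat.dvd_prime_pow Nat.prime_two).1 (Dvd.intro_left _ h)
  have hi := Nat.two_pow_pos i
  rcases i with _ | _ | i <;> rcases l with _ | _ | l <;>
    simp only [pow_succ, pow_zero] at hl hi ⊢ <;> omega

theorem two_pow_eq_eight_of_add_one_eq_pow (hq : Odd q) (hk : 1 < k) (h : 2 ^ m + 1 = q ^ k) :
    2 ^ m = 8 := by
  obtain ⟨j, rfl⟩ | hk_odd := k.even_or_odd
  · obtain ⟨w, hw⟩ : ∃ w, q ^ j = w + 1 := Nat.exists_eq_add_one.2 (pow_pos hq.pos _)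
    rw [pow_add, hw] at h
    obtain rfl : w = 2 := eq_two_of_mul_add_two_eq_two_pow (m := m) (by linarith)
    linarith
  · have hdvd : (q : ℤ) ^ k - 1 ∣ 2 ^ m := by
      rw [← eq_sub_iff_add_eq.2 (by exact_mod_cast h : (2 : ℤ) ^ m + 1 = q ^ k)]
    have hpow : (q : ℤ) ^ k = q :=
      pow_eq_self_of_sub_one_dvd_two_pow (mod_cast hq) hk_odd hdvd
    have hq1 : 1 < q := lt_of_le_of_ne' hq.pos (by rintro rfl; simp at h)
    exact absurd ((Nat.pow_eq_self_iff hq1).1 (mod_cast hpow)) hk.ne'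

theorem pow_add_one_ne_two_pow (hq : Odd q) (hq1 : 1 < q) (hk : 1 < k) : q ^ k + 1 ≠ 2 ^ m := by
  intro h
  obtain ⟨j, rfl⟩ | hk_odd := k.even_or_odd
  · have hmod : ((q : ℤ) ^ j) ^ 2 % 4 = 1 :=
      Int.sq_mod_four_eq_one_of_odd (Odd.pow (mod_cast hq))
    have hlt : 1 < q ^ (j + j) := Nat.one_lt_pow (by lia) hq1
    rw [← pow_mul, mul_two] at hmod
    rcases m with _ | _ | m <;> [skip; skip; rw [pow_succ, pow_succ] at h] <;> lia
  · have hdvd : (-q : ℤ) ^ k - 1 ∣ 2 ^ m := by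
      rw [hk_odd.neg_pow, ← neg_add', neg_dvd]
      exact_mod_cast h.dvd
    have hpow : (-q : ℤ) ^ k = -q :=
      pow_eq_self_of_sub_one_dvd_two_pow (Odd.neg (mod_cast hq)) hk_odd hdvd
    rw [hk_odd.neg_pow, neg_inj] at hpow
    exact hk.ne' ((Nat.pow_eq_self_iff hq1).1 (mod_cast hpow))

theorem exists_odd_prime_dvd_of_consecutive_pow {x : ℕ} (hq : Odd q) (hq1 : 1 < q) (hk : 1 < k)
    (hx : x + 1 = q ^ k ∨ q ^ k + 1 = x) (h89 : ¬ (x = 8 ∧ q ^ k = 9)) :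
    ∃ s, s.Prime ∧ s ∣ x ∧ Odd s := by
  obtain ⟨m, rfl⟩ | h := x.eq_two_pow_or_exists_odd_prime_and_dvd
  · obtain hx | hx := hx
    · have := two_pow_eq_eight_of_add_one_eq_pow hq hk hx
      exact absurd ⟨this, by lia⟩ h89
    · exact absurd hx (pow_add_one_ne_two_pow hq hq1 hk)
  · exact h

end PowersOfTwo

section SeparatingPrime

theorem radN_pos (n : ℕ) : 0 < radN n :=
  Finset.prod_pos fun _ hp ↦ (Nat.prime_of_mem_primeFactors hp).pos

theorem mul_mul_le_radN {n p q r : ℕ} (hp : p ∈ n.primeFactors) (hq : q ∈ n.primeFactors)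
    (hr : r ∈ n.primeFactors) (hpq : p ≠ q) (hpr : p ≠ r) (hqr : q ≠ r) :
    p * q * r ≤ radN n := by
  have hsub : {p, q, r} ⊆ n.primeFactors := by
    simp only [Finset.insert_subset_iff, Finset.singleton_subset_iff, hp, hq, hr, and_self]
  calc p * q * r = ∏ l ∈ {p, q, r}, l := by simp [hpq, hpr, hqr, mul_assoc]
    _ ≤ radN n := Finset.prod_le_prod_of_subset_of_one_le' hsub
      fun l hl _ ↦ (Nat.prime_of_mem_primeFactors hl).one_le

variable {x w c : ℕ}

theorem sixteen_mul_pow_four_le_radN_sq_mul {q s : ℕ} (hx : Even x) (hw : Odd w) (hx0 : x ≠ 0)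
    (hq : q.Prime) (hs : s.Prime) (hqw : q ∣ w) (hsN : s ∣ x * w) (hs_odd : Odd s) (hqs : q ≠ s)
    (h : 4 * q ^ 2 ≤ s ^ 2 * c) : 16 * q ^ 4 ≤ radN (x * w) ^ 2 * c := by
  have hN : x * w ≠ 0 := mul_ne_zero hx0 hw.pos.ne'
  have hrad : 2 * q * s ≤ radN (x * w) := by
    refine mul_mul_le_radN (Nat.mem_primeFactors.2 ⟨Nat.prime_two, hx.two_dvd.mul_right w, hN⟩)
      (Nat.mem_primeFactors.2 ⟨hq, hqw.mul_left x, hN⟩) (Nat.mem_primeFactors.2 ⟨hs, hsN, hN⟩)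
      ?_ ?_ hqs
    · rintro rfl
      exact Nat.not_even_iff_odd.2 (hw.of_dvd_nat hqw) even_two
    · rintro rfl
      exact Nat.not_even_iff_odd.2 hs_odd even_two
  calc 16 * q ^ 4 = 4 * q ^ 2 * (4 * q ^ 2) := by ring
    _ ≤ 4 * q ^ 2 * (s ^ 2 * c) := by gcongr
    _ = (2 * q * s) ^ 2 * c := by ring
    _ ≤ radN (x * w) ^ 2 * c := by gcongr

theorem exists_sixteen_mul_pow_four_le_of_not_isPrimePow (hx : Even x) (hx0 : x ≠ 0)
    (hw : Odd w) (hw1 : w ≠ 1) (hpow : ¬ IsPrimePow w) (hc : 4 ≤ c) :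
    ∃ q, q.Prime ∧ q ∣ w ∧ 16 * q ^ 4 ≤ radN (x * w) ^ 2 * c := by
  have hq := Nat.minFac_prime hw1
  have hqw := w.minFac_dvd
  obtain ⟨s, hs, hsw, hsq⟩ : ∃ s, s.Prime ∧ s ∣ w ∧ s ≠ w.minFac := by
    by_contra! h
    exact hpow (isPrimePow_iff_unique_prime_dvd.2 ⟨_, ⟨hq, hqw⟩, fun s hs ↦ h s hs.1 hs.2⟩)
  have hqs : w.minFac ≤ s := Nat.minFac_le_of_dvd hs.two_le hsw
  refine ⟨w.minFac, hq, hqw, sixteen_mul_pow_four_le_radN_sq_mul hx hw hx0 hq hs hqw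
    (hsw.mul_left x) (hw.of_dvd_nat hsw) hsq.symm ?_⟩
  rw [mul_comm]
  gcongr

theorem exists_sixteen_mul_pow_four_le_of_isPrimePow (hx : Even x) (hx0 : x ≠ 0) (hw : Odd w)
    (hpow : IsPrimePow w) (hprime : ¬ w.Prime) (hxw : x + 1 = w ∨ w + 1 = x)
    (h89 : ¬ (x = 8 ∧ w = 9)) (hc : w ≤ c) :
    ∃ q, q.Prime ∧ q ∣ w ∧ 16 * q ^ 4 ≤ radN (x * w) ^ 2 * c := by
  obtain ⟨q, k, hq, hk, rfl⟩ := (isPrimePow_nat_iff w).1 hpow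
  have hk1 : 1 < k := lt_of_le_of_ne' hk (by rintro rfl; exact hprime (by rwa [pow_one]))
  have hqw : q ∣ q ^ k := dvd_pow_self q hk.ne'
  obtain ⟨s, hs, hsx, hs_odd⟩ := exists_odd_prime_dvd_of_consecutive_pow
    (hw.of_dvd_nat hqw) hq.one_lt hk1 hxw h89
  have hcop : x.Coprime (q ^ k) := by
    obtain h | h := hxw <;> simp [← h]
  have hs3 : 3 ≤ s := hs.two_le.lt_of_ne' (by rintro rfl; exact absurd hs_odd (by decide))
  refine ⟨q, hq, hqw, sixteen_mul_pow_four_le_radN_sq_mul hx hw hx0 hq hs hqw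
    (hsx.mul_right _) hs_odd ?_ ?_⟩
  · rintro rfl
    exact Nat.not_coprime_of_dvd_of_dvd hs.one_lt hsx hqw hcop
  · have hq2 : q ^ 2 ≤ q ^ k := Nat.pow_le_pow_right hq.pos hk1
    calc 4 * q ^ 2 ≤ 3 ^ 2 * q ^ k := by gcongr; norm_num
      _ ≤ s ^ 2 * c := by gcongr

variable {a b : ℕ}

theorem exists_rearrangement_even_odd_odd (hab : a.Coprime b) :
    ∃ x y z, ({a, b, a + b} : Multiset ℕ) = {x, y, z} ∧ Even x ∧ Odd y ∧ Odd z ∧ y ≤ z ∧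
      x.Coprime y ∧ x.Coprime z ∧ y.Coprime z ∧ (x + y = z ∨ y + z = x) := by
  have hperm {x y z : ℕ} : ({x, y, z} : Multiset ℕ) = {z, x, y} := by
    simp only [Multiset.insert_eq_cons, ← Multiset.singleton_add]
    abel
  obtain ha | ha := a.even_or_odd
  · have hb : Odd b := (hab.coprime_dvd_left ha.two_dvd).odd_of_left
    exact ⟨a, b, a + b, rfl, ha, hb, ha.add_odd hb, by lia, hab, by simpa, by simpa using hab.symm,
      .inl rfl⟩
  obtain hb | hb := b.even_or_odd
  · exact ⟨b, a, a + b, Multiset.cons_swap a b _, hb, ha, ha.add_even hb, by lia, hab.symm,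
      by simpa using hab.symm, by simpa, .inl (add_comm b a)⟩
  · obtain hle | hle := le_total a b
    · exact ⟨a + b, a, b, hperm, ha.add_odd hb, ha, hb, hle, by simpa using hab.symm, by simpa, hab,
        .inr rfl⟩
    · exact ⟨a + b, b, a, by rw [hperm, Multiset.pair_comm], ha.add_odd hb, hb, ha, hle, by simpa,
        by simpa using hab.symm, hab.symm, .inr (add_comm b a)⟩

theorem four_le_add_of_forall_ne_one_prime (ha : 0 < a) (hb : 0 < b)
    (hnotNq : ¬ ∃ N q : ℕ, q.Prime ∧ ({a, b, a + b} : Multiset ℕ) = {1, N, q}) : 4 ≤ a + b := by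
  by_contra! hlt
  have : a < 4 := by lia
  have : b < 4 := by lia
  interval_cases a <;> interval_cases b <;> try lia
  · exact hnotNq ⟨1, 2, Nat.prime_two, rfl⟩
  · exact hnotNq ⟨2, 3, Nat.prime_three, rfl⟩
  · exact hnotNq ⟨2, 3, Nat.prime_three, by decide⟩

theorem exists_prime_dvd_mul_sixteen_mul_pow_four_le {y z : ℕ} (hx0 : x ≠ 0) (hx : Even x)
    (hy : Odd y) (hz : Odd z) (hle : y ≤ z) (hyz : y.Coprime z) (hsum : x + y = z ∨ y + z = x)
    (hnot189 : ({x, y, z} : Multiset ℕ) ≠ {1, 8, 9})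
    (hnotNq : ¬ ∃ N q : ℕ, q.Prime ∧ ({x, y, z} : Multiset ℕ) = {1, N, q})
    (hc : 4 ≤ c) (hzc : z ≤ c) :
    ∃ q, q.Prime ∧ q ∣ y * z ∧ 16 * q ^ 4 ≤ radN (x * (y * z)) ^ 2 * c := by
  have hswap : ({x, y, z} : Multiset ℕ) = {y, x, z} := Multiset.cons_swap x y {z}
  have hy0 := hy.pos
  by_cases hpow : IsPrimePow (y * z)
  · obtain rfl : y = 1 := by
      obtain h | h := (hyz.isPrimePow_dvd_mul hpow).1 dvd_rfl
      · nlinarith [Nat.le_of_dvd hy.pos h]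
      · nlinarith [Nat.le_of_dvd hz.pos h]
    rw [one_mul] at hpow ⊢
    refine exists_sixteen_mul_pow_four_le_of_isPrimePow hx hx0 hz hpow
      (fun hzp ↦ hnotNq ⟨x, z, hzp, hswap⟩) (by lia) ?_ hzc
    rintro ⟨rfl, rfl⟩
    exact hnot189 hswap
  · refine exists_sixteen_mul_pow_four_le_of_not_isPrimePow hx hx0 (hy.mul hz) (fun h ↦ ?_) hpow hc
    obtain ⟨rfl, rfl⟩ := mul_eq_one.1 h
    obtain rfl : x = 2 := by lia
    exact hnotNq ⟨1, 2, Nat.prime_two, by decide⟩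

theorem exists_separatedPrimes_two (ha : 0 < a) (hb : 0 < b) (hab : a.Coprime b)
    (hnot189 : ({a, b, a + b} : Multiset ℕ) ≠ {1, 8, 9})
    (hnotNq : ¬ ∃ N q : ℕ, q.Prime ∧ ({a, b, a + b} : Multiset ℕ) = {1, N, q}) :
    ∃ q, SeparatedPrimes a b 2 q ∧
      16 * q ^ 4 ≤ radN (a * b * (a + b)) ^ 2 * (a + b) := by
  obtain ⟨x, y, z, heq, hx, hy, hz, hle, hxy, hxz, hyz, hsum⟩ :=
    exists_rearrangement_even_odd_odd hab
  have hN : a * b * (a + b) = x * (y * z) := by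
    simpa [mul_assoc] using congrArg Multiset.prod heq
  have hN0 : a * b * (a + b) ≠ 0 := by positivity
  have hzle : z ≤ a + b := by
    have hz : z ∈ ({a, b, a + b} : Multiset ℕ) := by rw [heq]; simp
    simp only [Multiset.insert_eq_cons, Multiset.mem_cons, Multiset.mem_singleton] at hz
    lia
  obtain ⟨q, hq, hqw, hqN⟩ := exists_prime_dvd_mul_sixteen_mul_pow_four_le
    (left_ne_zero_of_mul (hN ▸ hN0)) hx hy hz hle hyz hsum (heq ▸ hnot189) (heq ▸ hnotNq)
    (four_le_add_of_forall_ne_one_prime ha hb hnotNq) hzle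
  refine ⟨q, ⟨Nat.mem_primeFactors.2 ⟨Nat.prime_two, ?_, hN0⟩,
    Nat.mem_primeFactors.2 ⟨hq, ?_, hN0⟩, fun n hn ↦ ?_⟩, hN ▸ hqN⟩
  · exact hN ▸ hx.two_dvd.mul_right _
  · exact hN ▸ hqw.mul_left _
  · rw [heq] at hn
    simp only [Multiset.insert_eq_cons, Multiset.mem_cons, Multiset.mem_singleton] at hn
    rintro ⟨h2, hqn⟩
    obtain rfl | rfl | rfl := hn
    · exact Nat.not_coprime_of_dvd_of_dvd hq.one_lt hqn hqw (hxy.mul_right hxz)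
    · exact hy.not_two_dvd_nat h2
    · exact hz.not_two_dvd_nat h2

end SeparatingPrime

theorem radN_sq_le_mul_pow_four {ι : Type*} [Fintype ι] {a b : ℕ} {ψs : ι → ℕ → ℤ} (ha : 0 < a)
    (hb : 0 < b) (hab : a.Coprime b) (hnot189 : ({a, b, a + b} : Multiset ℕ) ≠ {1, 8, 9})
    (hnotNq : ¬ ∃ N q : ℕ, q.Prime ∧ ({a, b, a + b} : Multiset ℕ) = {1, N, q})
    (hcard : Fintype.card ι = #(a * b * (a + b)).primeFactors - 2)
    (hψs : ∀ i, MemT0 a b (ψs i)) (hLI : LinearIndependent ℤ ψs) :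
    (radN (a * b * (a + b)) : ℝ) ^ 2 ≤ ((a + b : ℕ) : ℝ) *
      ((∏ l ∈ (a * b * (a + b)).primeFactors, ((a * b * (a + b)).factorization l : ℝ)) *
        ∏ i, dNorm (ψs i)) ^ 4 := by
  obtain ⟨q, hq, hqN⟩ := exists_separatedPrimes_two ha hb hab hnot189 hnotNq
  have hqR : 16 * (q : ℝ) ^ 4 ≤ radN (a * b * (a + b)) ^ 2 * ((a + b : ℕ) : ℝ) :=
    mod_cast hqN
  have hR := radN_le_mul_prod_dNorm ha hb hab hcard hψs hLI hq
  set R : ℝ := (radN (a * b * (a + b)) : ℝ)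
  set X := (∏ l ∈ (a * b * (a + b)).primeFactors, ((a * b * (a + b)).factorization l : ℝ)) *
    ∏ i, dNorm (ψs i)
  have hR0 : 0 < R ^ 2 := pow_pos (Nat.cast_pos.2 (radN_pos _)) 2
  refine le_of_mul_le_mul_left ?_ hR0
  calc R ^ 2 * R ^ 2 = R ^ 4 := by ring
    _ ≤ ((2 : ℕ) * q * X) ^ 4 := by gcongr
    _ = 16 * q ^ 4 * X ^ 4 := by push_cast; ring
    _ ≤ R ^ 2 * ((a + b : ℕ) : ℝ) * X ^ 4 := by gcongr
    _ = R ^ 2 * (((a + b : ℕ) : ℝ) * X ^ 4) := by ring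

theorem rpow_le_of_sq_le_mul_pow_four {c R X M : ℝ} (hc : 0 < c) (hR : 0 ≤ R) (hX : 0 ≤ X)
    (hM : 0 < M) (hcR : c ≤ R ^ M) (h : R ^ 2 ≤ c * X ^ 4) : c ^ ((2 - M) / (4 * M)) ≤ X := by
  have hcR2 : c ^ (2 / M) ≤ R ^ 2 := by
    calc c ^ (2 / M) ≤ (R ^ M) ^ (2 / M) := by gcongr
      _ = R ^ 2 := by rw [← Real.rpow_mul hR, mul_div_cancel₀ _ hM.ne', Real.rpow_two]
  refine le_of_pow_le_pow_left₀ four_ne_zero hX ?_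
  calc (c ^ ((2 - M) / (4 * M))) ^ 4 = c ^ (2 / M) / c := by
        rw [← Real.rpow_mul_natCast hc.le, ← Real.rpow_sub_one hc.ne']
        congr 1
        push_cast
        field_simp
    _ ≤ R ^ 2 / c := by gcongr
    _ ≤ X ^ 4 := (div_le_iff₀' hc).2 h

theorem key_lower_bound_general {ι : Type*} [Fintype ι] (a b c : ℕ) (ha : 0 < a) (hb : 0 < b)
    (hab : a.Coprime b) (habc : a + b = c)
    (hnot189 : ({a, b, c} : Multiset ℕ) ≠ {1, 8, 9})
    (hnotNq : ¬ ∃ N q : ℕ, q.Prime ∧ ({a, b, c} : Multiset ℕ) = {1, N, q})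
    (ψs : ι → ℕ → ℤ) (hcard : Fintype.card ι = #(a * b * c).primeFactors - 2)
    (hψs : ∀ i, MemT0 a b (ψs i)) (hLI : LinearIndependent ℤ ψs)
    (M : ℝ) (hM : 0 < M) (hrad : (c : ℝ) ≤ (radN (a * b * c) : ℝ) ^ M) :
    (c : ℝ) ^ ((2 - M) / (4 * M)) /
        (∏ p ∈ (a * b * c).primeFactors, ((a * b * c).factorization p : ℝ)) ≤
      ∏ i, dNorm (ψs i) := by
  subst habc
  have hV : 0 < ∏ p ∈ (a * b * (a + b)).primeFactors, ((a * b * (a + b)).factorization p : ℝ) :=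
    Finset.prod_pos fun p hp ↦ zero_lt_one.trans_le (one_le_factorization hp)
  have hD : 0 ≤ ∏ i, dNorm (ψs i) := Finset.prod_nonneg fun i _ ↦ dNorm_nonneg _
  rw [div_le_iff₀' hV]
  exact rpow_le_of_sq_le_mul_pow_four (by positivity) (Nat.cast_nonneg _) (by positivity) hM hrad
    (radN_sq_le_mul_pow_four ha hb hab hnot189 hnotNq hcard hψs hLI)

/-- Key lower bound for products of norms of derivations in `𝒯°(a,b)`. -/
theorem key_lower_bound (a b c : ℕ) (ha : 0 < a) (hb : 0 < b) (hc : 0 < c)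
    (h1 : Nat.Coprime a b) (h2 : Nat.Coprime a c) (h3 : Nat.Coprime b c)
    (habc : a + b = c)
    (hnot189 : ({a, b, c} : Multiset ℕ) ≠ {1, 8, 9})
    (hnotNq : ¬ ∃ N q : ℕ, q.Prime ∧ ({a, b, c} : Multiset ℕ) = {1, N, q})
    (ψs : Fin ((a * b * c).primeFactors.card - 2) → (ℕ → ℤ))
    (hψs : ∀ i, MemT0 a b (ψs i)) (hLI : LinearIndependent ℤ ψs)
    (M : ℝ) (hM1 : 1 < M) (hM2 : M < 2)
    (hrad : (c : ℝ) < (radN (a * b * c) : ℝ) ^ M) :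
    (c : ℝ) ^ ((2 - M) / (4 * M)) /
        (∏ p ∈ (a * b * c).primeFactors, ((a * b * c).factorization p : ℝ)) ≤
      ∏ i, dNorm (ψs i) :=
  key_lower_bound_general a b c ha hb h1 habc hnot189 hnotNq ψs (Fintype.card_fin _) hψs hLI
    M (zero_lt_one.trans hM1) hrad.le
end
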